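/- Let m ≥ 0, n ≥ 1 be integers and k ∈ ℤ with k ≥ 1−n, and set T̂_{a,b}^{(ν)}(z) = T_{a,b}^{(ν)}(−z). Then, besides σ_{m,n}(z) = z·(d/dz)T_{m,n}^{(k)}(z)/T_{m,n}^{(k)}(z) − (m+1)n, the function σ̂(z) = z · (d/dz)T̂_{m,n+k}^{(−k)}(z) / T̂_{m,n+k}^{(−k)}(z) − (m+1)z − (m+1)n is also a solution of S_V with the same parameters ν = (m+1, −n, m+n+k+1), at every z ≠ 0 where the relevant polynomial is nonzero. -/

import Mathlib

noncomputable section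

open Finset

/-- Generalized binomial coefficient `C(x, k)` for real `x`. -/
def genBinom (x : ℝ) (k : ℕ) : ℝ :=
  (∏ i ∈ Finset.range k, (x - i)) / (Nat.factorial k)

/-- Associated Laguerre polynomial `L_n^{(α)}(z)`, with the convention `L_n^{(α)} = 0` for `n < 0`. -/
def lagL (n : ℤ) (α : ℝ) : ℝ → ℝ := fun z =>
  if n < 0 then 0
  else ∑ k ∈ Finset.range (n.toNat + 1),
    (-1 : ℝ) ^ k * genBinom ((n : ℝ) + α) (n.toNat - k) * z ^ k / (Nat.factorial k)

/-- Generalised Laguerre polynomial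
`T_{m,n}^{(μ)}(z) = det[(d/dz)^{j+k} L_{m+n}^{(μ+1)}(z)]_{j,k=0}^{n-1}`
(with `T_{m,0}^{(μ)} = 1`, the empty determinant). -/
def genLag (m : ℤ) (n : ℕ) (μ : ℝ) : ℝ → ℝ := fun z =>
  Matrix.det (Matrix.of fun j k : Fin n =>
    iteratedDeriv ((j : ℕ) + (k : ℕ)) (lagL (m + n) (μ + 1)) z)

/-- Wronskian `Wr(f_1, …, f_r)(z) = det[(d/dz)^{j-1} f_k(z)]`. -/
def wronskian {r : ℕ} (f : Fin r → ℝ → ℝ) : ℝ → ℝ := fun z =>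
  Matrix.det (Matrix.of fun j k : Fin r => iteratedDeriv (j : ℕ) (f k) z)

/-- The constant `c_{m,n} = (-1)^{n(2m+1+n)/2} ∏_{j=1}^n (j-1)!/(m+j)!`. -/
def cmn (m n : ℕ) : ℝ :=
  (-1 : ℝ) ^ (n * (2 * m + 1 + n) / 2) *
    ∏ j ∈ Finset.range n, (Nat.factorial j : ℝ) / (Nat.factorial (m + j + 1))

/-- `τ_{m,n}^{(μ)}(z) = det[(z d/dz)^{j+k} L_{m+n}^{(n+μ)}(z)]_{j,k=0}^{n-1}`. -/
def tauP (m : ℤ) (n : ℕ) (μ : ℝ) : ℝ → ℝ := fun z =>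
  Matrix.det (Matrix.of fun j k : Fin n =>
    ((fun (g : ℝ → ℝ) => fun t => t * deriv g t)^[(j : ℕ) + (k : ℕ)]
      (lagL (m + n) ((n : ℝ) + μ))) z)

/-- Hirota bilinear operator `D_z(f • g) = f' g - f g'`. -/
def hirota (f g : ℝ → ℝ) (z : ℝ) : ℝ := deriv f z * g z - f z * deriv g z

/-- Probabilists' Hermite polynomial `He_n` as a real function. -/
def He (n : ℕ) : ℝ → ℝ := fun z => Polynomial.aeval z (Polynomial.hermite n)

/-- The fifth Painlevé equation (with `δ = -1/2`) for `w` with parameters `(a, b, c)`,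
holding at the point `z`. -/
def PV (a b c : ℝ) (w : ℝ → ℝ) (z : ℝ) : Prop :=
  iteratedDeriv 2 w z =
    (1 / (2 * w z) + 1 / (w z - 1)) * (deriv w z) ^ 2
      - (1 / z) * deriv w z
      + (w z - 1) ^ 2 * (a * (w z) ^ 2 + b) / (z ^ 2 * w z)
      + c * w z / z
      - w z * (w z + 1) / (2 * (w z - 1))

/-- The Jimbo–Miwa–Okamoto `σ`-equation `S_V` with parameters `(ν₁, ν₂, ν₃)`,
holding at the point `z`. -/
def SV (ν₁ ν₂ ν₃ : ℝ) (σ : ℝ → ℝ) (z : ℝ) : Prop :=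
  (z * iteratedDeriv 2 σ z) ^ 2 =
    (2 * (deriv σ z) ^ 2 + (ν₁ + ν₂ + ν₃ - z) * deriv σ z + σ z) ^ 2
      - 4 * deriv σ z * (deriv σ z + ν₁) * (deriv σ z + ν₂) * (deriv σ z + ν₃)

/-!
The derivatives of a solution `y` of Kummer's equation `x y'' + (c - x) y' + ν y = 0` have Hankel
determinants `τ_n = det (y^{(i + j)})` satisfying the Toda equation
`τ_{n-1} τ_{n+1} = τ_n τ_n'' - τ_n' ^ 2`, by Desnanot–Jacobi condensation. For `h_n = τ_n' / τ_n`,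
Kummer's equation is the first of a sequence of string equations, one for each link `(n, n + 1)` and
one for each site `n`, and differentiating a string equation along the Toda chain yields the next
one. A cubic relation in `h_n`, `h_n'` and `h_{n+1}` is likewise carried from `n` to `n + 1`.
Eliminating `h_{n+1}` and `h_n''` between the cubic and the site equation is `S_V` for
`x h_n - (ν + 1 - n) n`. All this is done in the field of rational functions, where the relevant
`τ_n` are nonzero by a degree count, and clearing denominators transfers the result to every real
point at which `τ_n` does not vanish.

The second family comes from the symmetry `σ(z) ↦ σ(-z) - ν₁ z + ν₁ (ν₁ - ν₂ - ν₃)` of `S_V`, which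
changes the parameters to `(ν₁, ν₁ - ν₃, ν₁ - ν₂)`: at `ν = (m + 1, -(n + k), m + n + 1)` these are
`(m + 1, -n, m + n + k + 1)`.
-/

theorem exists_derivation_extension {R A B : Type*} [CommRing R] [CommRing A] [CommRing B]
    [Algebra R A] [Algebra R B] [Algebra A B] [IsScalarTower R A B] [Algebra.FormallyEtale A B]
    (d : Derivation R A A) :
    ∃ D : Derivation R B B, ∀ a, D (algebraMap A B a) = algebraMap A B (d a) := by
  let δ : Derivation R A B := (Algebra.linearMap A B).compDer d
  let e := KaehlerDifferential.tensorKaehlerEquivOfFormallyEtale R A B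
  let l : TensorProduct A B (Ω[A⁄R]) →ₗ[B] B := δ.liftKaehlerDifferential.liftBaseChange B
  refine ⟨(l ∘ₗ e.symm.toLinearMap).compDer (KaehlerDifferential.D R B), fun a => ?_⟩
  simp [e, l, δ, KaehlerDifferential.tensorKaehlerEquivOfFormallyEtale_symm_D_algebraMap]

section Derivation

variable {R A : Type*} [CommRing R] [CommRing A] [Algebra R A] (D : Derivation R A A)

theorem derivation_prod {ι : Type*} [DecidableEq ι] (s : Finset ι) (f : ι → A) :
    D (∏ i ∈ s, f i) = ∑ j ∈ s, (∏ i ∈ s.erase j, f i) * D (f j) := by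
  induction s using Finset.induction_on with
  | empty => simp
  | insert a s ha ih =>
    have herase : ∀ j ∈ s, (insert a s).erase j = insert a (s.erase j) := fun j hj =>
      erase_insert_of_ne (by rintro rfl; exact ha hj)
    rw [prod_insert ha, D.leibniz, ih, sum_insert ha, erase_insert ha, smul_eq_mul, smul_eq_mul,
      mul_sum, add_comm]
    congr 1
    refine sum_congr rfl fun j hj => ?_
    rw [herase j hj, prod_insert (by simp [ha]), mul_assoc]

theorem derivation_det {ι : Type*} [Fintype ι] [DecidableEq ι] (M : Matrix ι ι A) :
    D M.det = ∑ j, (M.updateCol j fun i => D (M i j)).det := by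
  simp only [Matrix.det_apply, map_sum]
  rw [sum_comm]
  refine sum_congr rfl fun s _ => ?_
  rw [Units.smul_def, map_zsmul, derivation_prod, smul_sum]
  refine sum_congr rfl fun j _ => ?_
  rw [Units.smul_def, ← prod_erase_mul _ _ (mem_univ j), Matrix.updateCol_self]
  congr 2
  refine prod_congr rfl fun i hi => ?_
  rw [Matrix.updateCol_ne (ne_of_mem_erase hi)]

end Derivation

/-! ### Hankel determinants and the Toda equation -/

section DesnanotJacobi

variable {A ι κ : Type*} [CommRing A] [Fintype ι] [DecidableEq ι]

open Matrix

theorem det_fromBlocks_mul_det_pow [Fintype κ] [DecidableEq κ] (M : Matrix ι ι A)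
    (B : Matrix ι κ A) (C : Matrix κ ι A) (E : Matrix κ κ A) :
    (fromBlocks M B C E).det * M.det ^ Fintype.card κ =
      M.det * (M.det • E - C * M.adjugate * B).det := by
  have helim : fromBlocks M B C E * fromBlocks 1 (-(M.adjugate * B)) 0 (M.det • 1) =
      fromBlocks M 0 C (M.det • E - C * M.adjugate * B) := by
    simp [fromBlocks_multiply, ← Matrix.mul_assoc, mul_adjugate, sub_eq_neg_add]
  rw [← det_fromBlocks_zero₁₂, ← helim, det_mul, det_fromBlocks_zero₂₁]
  simp

/-- The determinant of `M` bordered by row `i` of `C` and column `j` of `B`, with corner entry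
`E i j`; these are the minors of `fromBlocks M B C E` that condensation relates. -/
def borderedDet (M : Matrix ι ι A) (B : Matrix ι κ A) (C : Matrix κ ι A) (E : Matrix κ κ A)
    (i j : κ) : A :=
  (fromBlocks M (B.submatrix id fun _ : Fin 1 => j) (C.submatrix (fun _ : Fin 1 => i) id)
    (of fun _ _ => E i j)).det

theorem borderedDet_mul_det (M : Matrix ι ι A) (B : Matrix ι κ A) (C : Matrix κ ι A)
    (E : Matrix κ κ A) (i j : κ) :
    borderedDet M B C E i j * M.det = M.det * (M.det • E - C * M.adjugate * B) i j := by
  have h := det_fromBlocks_mul_det_pow M (B.submatrix id fun _ : Fin 1 => j)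
    (C.submatrix (fun _ : Fin 1 => i) id) (of fun _ _ => E i j)
  rw [Fintype.card_fin, pow_one, det_fin_one] at h
  exact h

theorem map_borderedDet {A' : Type*} [CommRing A'] (φ : A →+* A') (M : Matrix ι ι A)
    (B : Matrix ι κ A) (C : Matrix κ ι A) (E : Matrix κ κ A) (i j : κ) :
    φ (borderedDet M B C E i j) =
      borderedDet (M.map φ) (B.map φ) (C.map φ) (E.map φ) i j := by
  rw [borderedDet, RingHom.map_det, RingHom.mapMatrix_apply, fromBlocks_map]
  rfl

theorem desnanot_jacobi_of_isLeftRegular (M : Matrix ι ι A) (B : Matrix ι (Fin 2) A)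
    (C : Matrix (Fin 2) ι A) (E : Matrix (Fin 2) (Fin 2) A) (hM : IsLeftRegular M.det) :
    M.det * (fromBlocks M B C E).det =
      borderedDet M B C E 0 0 * borderedDet M B C E 1 1 -
        borderedDet M B C E 0 1 * borderedDet M B C E 1 0 := by
  have hdet := det_fromBlocks_mul_det_pow M B C E
  rw [Fintype.card_fin, det_fin_two] at hdet
  have hborder := borderedDet_mul_det M B C E
  refine (hM.pow 2) ?_
  set F := M.det • E - C * M.adjugate * B
  set b := borderedDet M B C E
  simp only
  linear_combination M.det * hdet - hborder 0 0 * (b 1 1 * M.det) - M.det * F 0 0 * hborder 1 1 +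
    hborder 0 1 * (b 1 0 * M.det) + M.det * F 0 1 * hborder 1 0

open Polynomial in
theorem desnanot_jacobi (M : Matrix ι ι A) (B : Matrix ι (Fin 2) A)
    (C : Matrix (Fin 2) ι A) (E : Matrix (Fin 2) (Fin 2) A) :
    M.det * (fromBlocks M B C E).det =
      borderedDet M B C E 0 0 * borderedDet M B C E 1 1 -
        borderedDet M B C E 0 1 * borderedDet M B C E 1 0 := by
  -- The determinant of `X + M` is monic, hence regular, and `X ↦ 0` recovers `M`.
  let ε : A[X] →+* A := evalRingHom 0
  have hε : ε ∘ Polynomial.C = id := by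
    ext; simp [ε]
  have hεM : (charmatrix (-M)).map ε = M := by
    ext i j; by_cases h : i = j <;> simp [ε, h]
  have hregular : IsLeftRegular (charmatrix (-M)).det := (charpoly_monic (-M)).isRegular.left
  have h := congrArg ε (desnanot_jacobi_of_isLeftRegular _ (B.map Polynomial.C)
    (C.map Polynomial.C) (E.map Polynomial.C) hregular)
  simpa only [map_mul, map_sub, RingHom.map_det, RingHom.mapMatrix_apply, fromBlocks_map,
    map_borderedDet, Matrix.map_map, hε, Matrix.map_id, hεM] using h

end DesnanotJacobi

section Hankel

variable {A ι : Type*} [CommRing A] [Fintype ι] [DecidableEq ι]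

/-- The minor of the infinite Hankel matrix `(g (i + j))` with rows `r` and columns `c`. -/
def hankelMinor (g : ℕ → A) (r c : ι → ℕ) : A :=
  (Matrix.of fun i j => g (r i + c j)).det

theorem hankelMinor_comm (g : ℕ → A) (r c : ι → ℕ) : hankelMinor g r c = hankelMinor g c r := by
  rw [hankelMinor, ← Matrix.det_transpose]
  simp only [hankelMinor, Matrix.transpose, Matrix.of_apply, add_comm]

theorem hankelMinor_comp_equiv {κ : Type*} [Fintype κ] [DecidableEq κ] (g : ℕ → A) (r c : ι → ℕ)
    (e : κ ≃ ι) : hankelMinor g (r ∘ e) (c ∘ e) = hankelMinor g r c :=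
  Matrix.det_submatrix_equiv_self e (Matrix.of fun i j => g (r i + c j))

theorem hankelMinor_eq_zero_of_col_eq (g : ℕ → A) (r : ι → ℕ) {c : ι → ℕ} {j k : ι} (hjk : j ≠ k)
    (hc : c j = c k) : hankelMinor g r c = 0 :=
  Matrix.det_zero_of_column_eq hjk fun i => by simp only [Matrix.of_apply, hc]

/-- The `n × n` Hankel determinant `det (g (i + j))`, `0 ≤ i, j < n`. -/
def hankelDet (g : ℕ → A) (n : ℕ) : A :=
  hankelMinor g (Fin.val : Fin n → ℕ) Fin.val

@[simp]
theorem hankelDet_zero (g : ℕ → A) : hankelDet g 0 = 1 :=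
  Matrix.det_isEmpty

@[simp]
theorem hankelDet_one (g : ℕ → A) : hankelDet g 1 = g 0 :=
  Matrix.det_fin_one _

theorem map_hankelDet {A' : Type*} [CommRing A'] (φ : A →+* A') (g : ℕ → A) (n : ℕ) :
    φ (hankelDet g n) = hankelDet (φ ∘ g) n :=
  RingHom.map_det φ _

theorem hankelDet_add (g : ℕ → A) (n k : ℕ) :
    hankelDet g (n + k) =
      hankelMinor g (Sum.elim Fin.val fun i : Fin k => n + i)
        (Sum.elim (Fin.val : Fin n → ℕ) fun i : Fin k => n + i) := by
  have h : (Fin.val : Fin (n + k) → ℕ) ∘ finSumFinEquiv =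
      Sum.elim (Fin.val : Fin n → ℕ) fun i : Fin k => n + i := by
    ext (i | i) <;> simp
  rw [hankelDet, ← hankelMinor_comp_equiv _ _ _ finSumFinEquiv, h]

/-- The minor of the infinite Hankel matrix with rows `0, …, n - 1, x` and columns
`0, …, n - 1, y`. -/
def borderedHankel (g : ℕ → A) (n x y : ℕ) : A :=
  hankelMinor g (Sum.elim Fin.val fun _ : Fin 1 => x) (Sum.elim (Fin.val : Fin n → ℕ) fun _ => y)

theorem borderedHankel_self (g : ℕ → A) (n : ℕ) : borderedHankel g n n n = hankelDet g (n + 1) := by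
  simp [borderedHankel, hankelDet_add]

theorem borderedHankel_comm (g : ℕ → A) (n x y : ℕ) :
    borderedHankel g n x y = borderedHankel g n y x :=
  hankelMinor_comm _ _ _

theorem hankelDet_mul_hankelDet_add_two (g : ℕ → A) (n : ℕ) :
    hankelDet g n * hankelDet g (n + 2) =
      borderedHankel g n n n * borderedHankel g n (n + 1) (n + 1) -
        borderedHankel g n n (n + 1) * borderedHankel g n (n + 1) n := by
  have h := desnanot_jacobi (Matrix.of fun i j : Fin n => g (i + j))
    (Matrix.of fun (i : Fin n) (j : Fin 2) => g (i + (n + j)))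
    (Matrix.of fun (i : Fin 2) (j : Fin n) => g (n + i + j))
    (Matrix.of fun i j => g (n + i + (n + j)))
  have hblocks {κ : Type} (s t : κ → ℕ) :
      Matrix.of (fun i j => g (Sum.elim (Fin.val : Fin n → ℕ) s i + Sum.elim Fin.val t j)) =
        Matrix.fromBlocks (Matrix.of fun i j : Fin n => g (i + j))
          (Matrix.of fun (i : Fin n) j => g (i + t j)) (Matrix.of fun i (j : Fin n) => g (s i + j))
          (Matrix.of fun i j => g (s i + t j)) := by
    ext (i | i) (j | j) <;> rfl
  simp only [hankelDet_add g n 2, borderedHankel, hankelMinor, hblocks]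
  exact h

variable {R : Type*} [CommRing R] [Algebra R A] (D : Derivation R A A) {g : ℕ → A}

theorem derivation_hankelMinor (hg : ∀ k, D (g k) = g (k + 1)) (r c : ι → ℕ) :
    D (hankelMinor g r c) = ∑ j, hankelMinor g r (Function.update c j (c j + 1)) := by
  rw [hankelMinor, derivation_det]
  refine sum_congr rfl fun j _ => congrArg Matrix.det ?_
  ext i k
  rcases eq_or_ne k j with rfl | hkj
  · simp [hg, add_assoc]
  · simp [hkj]

theorem derivation_borderedHankel (hg : ∀ k, D (g k) = g (k + 1)) (n x : ℕ) :
    D (borderedHankel g n x n) = borderedHankel g n x (n + 1) := by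
  rw [borderedHankel, derivation_hankelMinor D hg, Fintype.sum_sum_type, sum_eq_zero, zero_add,
    Fin.sum_univ_one, Sum.update_elim_inr]
  · congr 2
    exact funext fun i => by rw [Subsingleton.elim i 0, Function.update_self, Sum.elim_inr]
  · intro j _
    rcases (Nat.succ_le_of_lt j.isLt).lt_or_eq with hj | hj
    · refine hankelMinor_eq_zero_of_col_eq g _ (j := .inl j) (k := .inl ⟨j + 1, hj⟩) ?_ ?_ <;>
        simp [Fin.ext_iff]
    · refine hankelMinor_eq_zero_of_col_eq g _ (j := .inl j) (k := .inr 0) ?_ ?_ <;>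
        simp [← hj]

theorem toda_hankelDet (hg : ∀ k, D (g k) = g (k + 1)) (n : ℕ) :
    hankelDet g n * hankelDet g (n + 2) =
      hankelDet g (n + 1) * D (D (hankelDet g (n + 1))) - D (hankelDet g (n + 1)) ^ 2 := by
  have hD : D (hankelDet g (n + 1)) = borderedHankel g n n (n + 1) := by
    rw [← borderedHankel_self, derivation_borderedHankel D hg]
  have hDD : D (D (hankelDet g (n + 1))) = borderedHankel g n (n + 1) (n + 1) := by
    rw [hD, borderedHankel_comm, derivation_borderedHankel D hg]
  rw [hDD, hD, hankelDet_mul_hankelDet_add_two, borderedHankel_self,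
    borderedHankel_comm g n (n + 1) n, sq]

end Hankel

/-! ### String equations along a Toda chain -/

section TodaChain

variable {R K : Type*} [CommRing R] [CommRing K] [Algebra R K]

/-- The condition that `h 0, …, h (n + 1)` begins a semi-infinite Toda chain for `D`, in logarithmic
derivatives `h j = D τ_j / τ_j`: for `1 ≤ j ≤ n` the function `D (h j) = τ_{j+1} τ_{j-1} / τ_j ^ 2`
does not vanish and its logarithmic derivative is `h (j + 1) - 2 h j + h (j - 1)`. -/
structure IsTodaChain (D : Derivation R K K) (h : ℕ → K) (n : ℕ) : Prop where
  zero : h 0 = 0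
  ne_zero : ∀ j < n, D (h (j + 1)) ≠ 0
  toda : ∀ j < n, D (D (h (j + 1))) = D (h (j + 1)) * (h (j + 2) - 2 * h (j + 1) + h j)

/-- The string equation (as an expression to be equated to `0`) on the link from `n` to `n + 1` of
a Toda chain issuing from Kummer's equation `x y'' + (c - x) y' + ν y = 0`. At `n = 0` it is the
Riccati form of that equation. -/
def linkString (D : Derivation R K K) (h : ℕ → K) (x c ν : K) (n : ℕ) : K :=
  x * ((h (n + 1) - h n) - (h (n + 1) - h n) ^ 2 - D (h n) - D (h (n + 1))) -
    (2 * n + c) * (h (n + 1) - h n) + 2 * n - ν - 2 * h n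

/-- The string equation (as an expression to be equated to `0`) at the site `n` of a Toda chain
issuing from Kummer's equation `x y'' + (c - x) y' + ν y = 0`. -/
def siteString (D : Derivation R K K) (h : ℕ → K) (x c ν : K) (n : ℕ) : K :=
  x * (x * ((1 - 2 * (h (n + 1) - h n)) * D (h n) + D (D (h n))) - (2 * n + c - 2) * D (h n)) +
    (2 * n + c - 2) * h n + n * (ν + 1 - n)

/-- The cubic first integral (as an expression to be equated to `0`) of the string equations. Here
`u` is the derivative of the `σ`-function `x * h n - (ν + 1 - n) * n`. -/
def stringCubic (D : Derivation R K K) (h : ℕ → K) (x c ν : K) (n : ℕ) : K :=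
  let u := h n + x * D (h n)
  let P := 2 * n + c - 1 - x * (1 - (h (n + 1) - h n))
  P * (u * (u + ν + c - 1)) - (P + x) * ((u + ν + 1 - n) * (u - n)) -
    x * D (h n) * (P * (P + x))

/-- The difference of the two sides of the Jimbo–Miwa–Okamoto `σ`-equation at the argument `x`, in
a function `s` with derivatives `s'` and `s''`. -/
def sigmaFive (ν₁ ν₂ ν₃ x s s' s'' : K) : K :=
  (x * s'') ^ 2 - (2 * s' ^ 2 + (ν₁ + ν₂ + ν₃ - x) * s' + s) ^ 2 +
    4 * s' * (s' + ν₁) * (s' + ν₂) * (s' + ν₃)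

variable {D : Derivation R K K} {h : ℕ → K} {x c ν : K} {n : ℕ}

theorem siteString_succ_of_linkString (hx : D x = 1) (hc : D c = 0) (hν : D ν = 0)
    (htoda : D (D (h (n + 1))) = D (h (n + 1)) * (h (n + 2) - 2 * h (n + 1) + h n))
    (hlink : linkString D h x c ν n = 0) (hsite : siteString D h x c ν n = 0) :
    siteString D h x c ν (n + 1) = 0 := by
  have hDlink := congrArg D hlink
  simp only [linkString, siteString] at hlink hsite hDlink ⊢
  simp only [map_add, map_sub, map_zero, Derivation.leibniz, Derivation.leibniz_pow, smul_eq_mul,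
    hx, hc, hν, htoda, Derivation.map_natCast, ← Nat.cast_ofNat (R := K), nsmul_eq_mul] at hDlink
  push_cast at hDlink ⊢
  rw [htoda]
  linear_combination x * hDlink + hsite - hlink

theorem linkString_succ_of_siteString [IsDomain K] (hx : D x = 1) (hc : D c = 0) (hν : D ν = 0)
    (hne : D (h (n + 1)) ≠ 0)
    (htoda : D (D (h (n + 1))) = D (h (n + 1)) * (h (n + 2) - 2 * h (n + 1) + h n))
    (hlink : linkString D h x c ν n = 0) (hsite : siteString D h x c ν (n + 1) = 0) :
    linkString D h x c ν (n + 1) = 0 := by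
  have hx0 : x ≠ 0 := by
    rintro rfl
    simp at hx
  have hDsite := congrArg D hsite
  simp only [linkString, siteString] at hlink hDsite ⊢
  rw [htoda] at hDsite
  simp only [map_add, map_sub, map_zero, Derivation.leibniz, smul_eq_mul, hx, hc, hν, htoda,
    Derivation.map_natCast, ← Nat.cast_ofNat (R := K), Derivation.map_one_eq_zero] at hDsite
  push_cast at hDsite ⊢
  refine (mul_eq_zero.mp (?_ : x * D (h (n + 1)) * _ = 0)).resolve_left (mul_ne_zero hx0 hne)
  linear_combination hDsite + x * D (h (n + 1)) * hlink

theorem stringCubic_succ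
    (htoda : D (D (h (n + 1))) = D (h (n + 1)) * (h (n + 2) - 2 * h (n + 1) + h n))
    (hlink : linkString D h x c ν n = 0) (hsite : siteString D h x c ν (n + 1) = 0)
    (hcubic : stringCubic D h x c ν n = 0) : stringCubic D h x c ν (n + 1) = 0 := by
  simp only [linkString, siteString, stringCubic] at *
  rw [htoda] at hsite
  set u := h (n + 1) + x * D (h (n + 1)) with hu
  set P := 2 * n + c - 1 - x * (1 - (h (n + 1) - h n)) with hP
  have hb : x * D (h (n + 1)) = x * ((h (n + 1) - h n) - (h (n + 1) - h n) ^ 2 - D (h n)) -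
      (2 * n + c) * (h (n + 1) - h n) + 2 * n - ν - 2 * h n := by
    linear_combination -hlink
  have hshift : P * (u * (u + ν + c - 1)) - (P + x) * ((u + ν - n) * (u - n - 1)) -
      x * D (h (n + 1)) * (P * (P + x)) = 0 := by
    rw [hu, hb, hP]
    linear_combination hcubic
  push_cast at hsite ⊢
  linear_combination hshift + (2 + x * (h (n + 2) - 2 * h (n + 1) + h n)) * hsite

theorem sigmaFive_of_siteString_of_stringCubic (hx : D x = 1) (hν : D ν = 0)
    (hsite : siteString D h x c ν n = 0) (hcubic : stringCubic D h x c ν n = 0) {s : K}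
    (hs : s = x * h n - (ν + 1 - n) * n) :
    sigmaFive (ν + 1 - n) (-n) (ν + c - 1) x s (D s) (D (D s)) = 0 := by
  have hDs : D s = h n + x * D (h n) := by
    simp [hs, hx, hν]
    ring
  have hxDDs : x * D (D s) = x * ((2 * n + c - x * (1 - 2 * (h (n + 1) - h n))) * D (h n)) -
      (2 * n + c - 2) * h n - n * (ν + 1 - n) := by
    simp only [siteString] at hsite
    simp only [hDs, map_add, Derivation.leibniz, smul_eq_mul, hx]
    linear_combination hsite
  rw [sigmaFive, hxDDs, hDs, hs]
  simp only [stringCubic] at hcubic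
  linear_combination (-4 * x * D (h n)) * hcubic

theorem IsTodaChain.siteString_and_stringCubic [IsDomain K] (hchain : IsTodaChain D h n)
    (hx : D x = 1) (hc : D c = 0) (hν : D ν = 0) (hbase : linkString D h x c ν 0 = 0) :
    siteString D h x c ν n = 0 ∧ stringCubic D h x c ν n = 0 := by
  suffices ∀ j ≤ n, siteString D h x c ν j = 0 ∧ linkString D h x c ν j = 0 ∧
      stringCubic D h x c ν j = 0 from ⟨(this n le_rfl).1, (this n le_rfl).2.2⟩
  intro j
  induction j with
  | zero => exact fun _ => ⟨by simp [siteString, hchain.zero], hbase,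
      by simp [stringCubic, hchain.zero]⟩
  | succ j ih =>
    intro hj
    obtain ⟨hsite, hlink, hcubic⟩ := ih (by lia)
    have htoda := hchain.toda j hj
    have hsite' := siteString_succ_of_linkString hx hc hν htoda hlink hsite
    exact ⟨hsite', linkString_succ_of_siteString hx hc hν (hchain.ne_zero j hj) htoda hlink hsite',
      stringCubic_succ htoda hlink hsite' hcubic⟩

end TodaChain

section LogDeriv

variable {R K : Type*} [CommRing R] [Field K] [Algebra R K] {D : Derivation R K K}

theorem derivation_logDeriv {f : K} (hf : f ≠ 0) :
    D (D f / f) = (f * D (D f) - D f ^ 2) / f ^ 2 := by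
  rw [Derivation.leibniz_div]
  simp only [smul_eq_mul]
  field_simp

theorem isTodaChain_logDeriv {τ : ℕ → K} {n : ℕ} (hτ₀ : D (τ 0) = 0)
    (htoda : ∀ j, τ j * τ (j + 2) = τ (j + 1) * D (D (τ (j + 1))) - D (τ (j + 1)) ^ 2)
    (hτ : ∀ j ≤ n + 1, τ j ≠ 0) : IsTodaChain D (fun j => D (τ j) / τ j) n := by
  have hD : ∀ j < n, D (D (τ (j + 1)) / τ (j + 1)) = τ j * τ (j + 2) / τ (j + 1) ^ 2 := by
    intro j hj
    rw [derivation_logDeriv (hτ _ (by lia)), htoda]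
  refine ⟨by simp [hτ₀], fun j hj => ?_, fun j hj => ?_⟩ <;>
    have h₀ := hτ j (by lia) <;>
    have h₁ := hτ (j + 1) (by lia) <;>
    have h₂ := hτ (j + 2) (by lia) <;>
    simp only [hD j hj]
  · exact div_ne_zero (mul_ne_zero h₀ h₂) (pow_ne_zero 2 h₁)
  · rw [Derivation.leibniz_div]
    simp only [Derivation.leibniz, Derivation.leibniz_pow, smul_eq_mul]
    field_simp
    ring

theorem sigmaFive_hankelDet {x c ν : K} {g : ℕ → K} {n : ℕ} (hx : D x = 1) (hc : D c = 0)
    (hν : D ν = 0) (hg : ∀ k, D (g k) = g (k + 1)) (hode : x * g 2 + (c - x) * g 1 + ν * g 0 = 0)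
    (hne : ∀ j ≤ n + 1, hankelDet g j ≠ 0) {s : K}
    (hs : s = x * (D (hankelDet g n) / hankelDet g n) - (ν + 1 - n) * n) :
    sigmaFive (ν + 1 - n) (-n) (ν + c - 1) x s (D s) (D (D s)) = 0 := by
  have hchain : IsTodaChain D (fun j => D (hankelDet g j) / hankelDet g j) n :=
    isTodaChain_logDeriv (by simp) (toda_hankelDet D hg) hne
  have hg₀ : g 0 ≠ 0 := by simpa using hne 1 (by lia)
  have hbase : linkString D (fun j => D (hankelDet g j) / hankelDet g j) x c ν 0 = 0 := by
    have hD : D (g 1 / g 0) = (g 0 * g 2 - g 1 ^ 2) / g 0 ^ 2 := by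
      simpa only [hg] using derivation_logDeriv (D := D) hg₀
    simp only [linkString, zero_add, hankelDet_one, hg, hankelDet_zero,
      Derivation.map_one_eq_zero, div_one, sub_zero, map_zero, hD, Nat.cast_zero, mul_zero,
      add_zero]
    field_simp
    linear_combination -g 0 * hode
  obtain ⟨hsite, hcubic⟩ := hchain.siteString_and_stringCubic hx hc hν hbase
  exact sigmaFive_of_siteString_of_stringCubic hx hν hsite hcubic hs

end LogDeriv

/-! ### Degrees of Hankel determinants of derivatives -/

section Degree

open Polynomial

variable {R : Type*} [CommRing R]

/-- The Hankel determinant `det (p^{(i + j)})`, `0 ≤ i, j < n`, of the derivatives of `p`. -/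
def derivativeHankel (p : R[X]) (n : ℕ) : R[X] :=
  hankelDet (fun k => derivative^[k] p) n

theorem toda_derivativeHankel (p : R[X]) (n : ℕ) :
    derivativeHankel p n * derivativeHankel p (n + 2) =
      Polynomial.wronskian (derivativeHankel p (n + 1))
        (derivative (derivativeHankel p (n + 1))) := by
  have h := toda_hankelDet derivative' (g := fun k => derivative^[k] p)
    (fun k => (Function.iterate_succ_apply' derivative k p).symm) n
  rw [Polynomial.wronskian, ← sq]
  exact h

variable {p : R[X]}

theorem coeff_wronskian_derivative {d : ℕ} (hp : p.natDegree = d + 1) :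
    (Polynomial.wronskian p (derivative p)).coeff (2 * d) = -((d + 1) * p.leadingCoeff ^ 2) := by
  have hp' : (derivative p).natDegree ≤ d := by
    simpa only [hp, Nat.add_sub_cancel] using natDegree_derivative_le p
  have hcoeff : (derivative p).coeff d = p.leadingCoeff * (d + 1) := by
    rw [coeff_derivative, leadingCoeff, hp]
  have hmul : (p * derivative p).coeff (2 * d + 1) = (d + 1) * p.leadingCoeff ^ 2 := by
    rw [show 2 * d + 1 = d + 1 + d by ring, coeff_mul_add_eq_of_natDegree_le hp.le hp', hcoeff,
      leadingCoeff, hp]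
    ring
  have hsq : (derivative p * derivative p).coeff (2 * d) = ((d + 1) * p.leadingCoeff) ^ 2 := by
    rw [two_mul, coeff_mul_add_eq_of_natDegree_le hp' hp', hcoeff]
    ring
  have hw : Polynomial.wronskian p (derivative p) =
      derivative (p * derivative p) - 2 * (derivative p * derivative p) := by
    rw [Polynomial.wronskian, derivative_mul]
    ring
  rw [hw, coeff_sub, coeff_derivative, hmul, ← C_ofNat, coeff_C_mul, hsq]
  push_cast
  ring

variable [IsDomain R] [CharZero R]

theorem coeff_wronskian_derivative_ne_zero {d : ℕ} (hp : p.natDegree = d + 1) :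
    (Polynomial.wronskian p (derivative p)).coeff (2 * d) ≠ 0 := by
  have hlead : p.leadingCoeff ≠ 0 :=
    leadingCoeff_ne_zero.mpr (ne_zero_of_natDegree_gt (n := 0) (by lia))
  rw [coeff_wronskian_derivative hp]
  exact neg_ne_zero.mpr (mul_ne_zero (Nat.cast_add_one_ne_zero d) (pow_ne_zero 2 hlead))

theorem wronskian_derivative_ne_zero {d : ℕ} (hp : p.natDegree = d + 1) :
    Polynomial.wronskian p (derivative p) ≠ 0 := fun hw =>
  coeff_wronskian_derivative_ne_zero hp (by rw [hw, coeff_zero])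

theorem natDegree_wronskian_derivative {d : ℕ} (hp : p.natDegree = d + 1) :
    (Polynomial.wronskian p (derivative p)).natDegree = 2 * d := by
  have hlt := natDegree_wronskian_lt_add (wronskian_derivative_ne_zero hp)
  have hp' := natDegree_derivative_le p
  exact le_antisymm (by lia) (le_natDegree_of_ne_zero (coeff_wronskian_derivative_ne_zero hp))

theorem derivativeHankel_ne_zero_and_natDegree (hp : p ≠ 0) {n : ℕ} (hn : n ≤ p.natDegree + 1) :
    derivativeHankel p n ≠ 0 ∧ (derivativeHankel p n).natDegree = n * (p.natDegree + 1 - n) := by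
  induction n using Nat.twoStepInduction with
  | zero => simp [derivativeHankel]
  | one => simp [derivativeHankel, hp]
  | more n ih₀ ih₁ =>
    obtain ⟨r, hr⟩ : ∃ r, p.natDegree = n + 1 + r := ⟨p.natDegree - (n + 1), by lia⟩
    rw [hr] at ih₀ ih₁ ⊢
    obtain ⟨hne₀, hdeg₀⟩ := ih₀ (by lia)
    obtain ⟨-, hdeg₁⟩ := ih₁ (by lia)
    have hdeg₁' : (derivativeHankel p (n + 1)).natDegree = (n * r + n + r) + 1 := by
      rw [hdeg₁, show n + 1 + r + 1 - (n + 1) = r + 1 by lia]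
      ring
    have htoda := toda_derivativeHankel p n
    have hne : derivativeHankel p (n + 2) ≠ 0 := by
      refine right_ne_zero_of_mul (a := derivativeHankel p n) ?_
      rw [htoda]
      exact wronskian_derivative_ne_zero hdeg₁'
    have hdeg := congrArg natDegree htoda
    rw [natDegree_mul hne₀ hne, natDegree_wronskian_derivative hdeg₁', hdeg₀,
      show n + 1 + r + 1 - n = r + 2 by lia] at hdeg
    refine ⟨hne, ?_⟩
    rw [show n + 1 + r + 1 - (n + 2) = r by lia]
    linarith

end Degree

/-! ### Generalised Laguerre polynomials -/

section Laguerre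

open Polynomial
open scoped Nat

theorem genBinom_succ (x : ℝ) (k : ℕ) :
    (k + 1) * genBinom x (k + 1) = (x - k) * genBinom x k := by
  rw [genBinom, genBinom, prod_range_succ, Nat.factorial_succ]
  push_cast
  field_simp

/-- The associated Laguerre polynomial `L_n^{(α)}` as an element of `ℝ[X]`. -/
def laguerrePoly (n : ℕ) (α : ℝ) : ℝ[X] :=
  ∑ k ∈ range (n + 1), monomial k ((-1) ^ k * genBinom (n + α) (n - k) / k !)

theorem coeff_laguerrePoly (n : ℕ) (α : ℝ) (k : ℕ) :
    (laguerrePoly n α).coeff k =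
      if k ≤ n then (-1) ^ k * genBinom (n + α) (n - k) / k ! else 0 := by
  simp [laguerrePoly, coeff_monomial]

theorem coeff_laguerrePoly_self_ne_zero (n : ℕ) (α : ℝ) : (laguerrePoly n α).coeff n ≠ 0 := by
  simp [coeff_laguerrePoly, genBinom, Nat.factorial_ne_zero]

theorem natDegree_laguerrePoly (n : ℕ) (α : ℝ) : (laguerrePoly n α).natDegree = n := by
  refine natDegree_eq_of_le_of_coeff_ne_zero ?_ (coeff_laguerrePoly_self_ne_zero n α)
  exact natDegree_le_iff_coeff_eq_zero.mpr fun k hk => by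
    rw [coeff_laguerrePoly, if_neg hk.not_ge]

theorem laguerrePoly_ne_zero (n : ℕ) (α : ℝ) : laguerrePoly n α ≠ 0 := fun h =>
  coeff_laguerrePoly_self_ne_zero n α (by rw [h, coeff_zero])

theorem coeff_laguerrePoly_succ (n : ℕ) (α : ℝ) (k : ℕ) :
    (k + 1) * (k + α + 1) * (laguerrePoly n α).coeff (k + 1) =
      (k - n) * (laguerrePoly n α).coeff k := by
  rcases lt_trichotomy k n with hkn | rfl | hkn
  · obtain ⟨r, rfl⟩ : ∃ r, n = k + 1 + r := ⟨n - (k + 1), by lia⟩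
    have hbinom := genBinom_succ (↑(k + 1 + r) + α) r
    rw [coeff_laguerrePoly, coeff_laguerrePoly, if_pos (by lia), if_pos (by lia),
      show k + 1 + r - (k + 1) = r by lia, show k + 1 + r - k = r + 1 by lia, Nat.factorial_succ]
    push_cast at hbinom ⊢
    field_simp
    linear_combination (-1) ^ k * hbinom
  · simp [coeff_laguerrePoly]
  · simp [coeff_laguerrePoly, hkn.not_ge, show ¬ k + 1 ≤ n by lia]

theorem laguerrePoly_ode (n : ℕ) (α : ℝ) :
    X * derivative (derivative (laguerrePoly n α)) +
        (C (α + 1) - X) * derivative (laguerrePoly n α) + C (n : ℝ) * laguerrePoly n α = 0 := by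
  ext k
  have hcoeff := coeff_laguerrePoly_succ n α k
  rw [sub_mul]
  rcases k with _ | k <;>
    simp only [coeff_add, coeff_sub, coeff_C_mul, coeff_X_mul, coeff_X_mul_zero, coeff_derivative,
      coeff_zero] <;>
    push_cast at hcoeff ⊢ <;>
    linear_combination hcoeff

theorem lagL_natCast (n : ℕ) (α : ℝ) : lagL n α = fun z => (laguerrePoly n α).eval z := by
  funext z
  rw [lagL, if_neg (by lia), laguerrePoly, eval_finsetSum]
  simp only [Int.toNat_natCast, Int.cast_natCast, eval_monomial]
  exact sum_congr rfl fun k _ => by ring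

theorem iteratedDeriv_eval (p : ℝ[X]) (k : ℕ) :
    iteratedDeriv k (fun z => p.eval z) = fun z => (derivative^[k] p).eval z := by
  induction k with
  | zero => simp
  | succ k ih =>
    rw [iteratedDeriv_succ, ih, Function.iterate_succ_apply']
    exact funext fun z => Polynomial.deriv _

/-- The generalised Laguerre polynomial `T_{m,n}^{(μ)}` as an element of `ℝ[X]`. -/
def genLagPoly (m n : ℕ) (μ : ℝ) : ℝ[X] :=
  derivativeHankel (laguerrePoly (m + n) (μ + 1)) n

theorem genLag_natCast (m n : ℕ) (μ : ℝ) :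
    genLag m n μ = fun z => (genLagPoly m n μ).eval z := by
  funext z
  rw [genLag, ← Nat.cast_add, lagL_natCast]
  simp only [iteratedDeriv_eval]
  rw [genLagPoly, derivativeHankel, ← coe_evalRingHom, map_hankelDet]
  rfl

end Laguerre

/-! ### The `σ`-equation for rational functions -/

section RationalSolution

open Polynomial

theorem SV_iff_sigmaFive_eq_zero {ν₁ ν₂ ν₃ : ℝ} {σ : ℝ → ℝ} {z : ℝ} :
    SV ν₁ ν₂ ν₃ σ z ↔ sigmaFive ν₁ ν₂ ν₃ z (σ z) (deriv σ z) (iteratedDeriv 2 σ z) = 0 := by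
  rw [SV, sigmaFive, ← sub_eq_zero]
  ring_nf

theorem SV_congr {ν₁ ν₂ ν₃ : ℝ} {σ ρ : ℝ → ℝ} {z : ℝ} (h : σ =ᶠ[nhds z] ρ) :
    SV ν₁ ν₂ ν₃ σ z ↔ SV ν₁ ν₂ ν₃ ρ z := by
  rw [SV, SV, h.iteratedDeriv_eq, h.deriv_eq, h.eq_of_nhds]

/-- The denominator-free form of `sigmaFive` at a function `s₀ / p` with derivatives `s₁ / p ^ 2`
and `s₂ / p ^ 3`. -/
def sigmaFiveHom {A : Type*} [CommRing A] (ν₁ ν₂ ν₃ x p s₀ s₁ s₂ : A) : A :=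
  (x * s₂ * p) ^ 2 - (2 * s₁ ^ 2 + (ν₁ + ν₂ + ν₃ - x) * s₁ * p ^ 2 + s₀ * p ^ 3) ^ 2 +
    4 * s₁ * (s₁ + ν₁ * p ^ 2) * (s₁ + ν₂ * p ^ 2) * (s₁ + ν₃ * p ^ 2)

theorem sigmaFive_div_eq_zero_iff {K : Type*} [Field K] {ν₁ ν₂ ν₃ x p s₀ s₁ s₂ : K} (hp : p ≠ 0) :
    sigmaFive ν₁ ν₂ ν₃ x (s₀ / p) (s₁ / p ^ 2) (s₂ / p ^ 3) = 0 ↔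
      sigmaFiveHom ν₁ ν₂ ν₃ x p s₀ s₁ s₂ = 0 := by
  have h : sigmaFiveHom ν₁ ν₂ ν₃ x p s₀ s₁ s₂ =
      p ^ 8 * sigmaFive ν₁ ν₂ ν₃ x (s₀ / p) (s₁ / p ^ 2) (s₂ / p ^ 3) := by
    rw [sigmaFive, sigmaFiveHom]
    field_simp
  rw [h, mul_eq_zero_iff_left (pow_ne_zero 8 hp)]

theorem map_sigmaFiveHom {A B : Type*} [CommRing A] [CommRing B] (φ : A →+* B)
    (ν₁ ν₂ ν₃ x p s₀ s₁ s₂ : A) :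
    φ (sigmaFiveHom ν₁ ν₂ ν₃ x p s₀ s₁ s₂) =
      sigmaFiveHom (φ ν₁) (φ ν₂) (φ ν₃) (φ x) (φ p) (φ s₀) (φ s₁) (φ s₂) := by
  simp only [sigmaFiveHom, map_add, map_sub, map_mul, map_pow, map_ofNat]

theorem derivation_div_pow {R K : Type*} [CommRing R] [Field K] [Algebra R K]
    (D : Derivation R K K) (a : K) {b : K} (hb : b ≠ 0) (k : ℕ) :
    D (a / b ^ k) = (D a * b - k * a * D b) / b ^ (k + 1) := by
  rcases k with _ | k
  · simp [hb]
  · rw [Derivation.leibniz_div, Derivation.leibniz_pow]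
    simp only [smul_eq_mul, nsmul_eq_mul, Nat.add_sub_cancel]
    field_simp
    ring

/-- The numerator over `p ^ (k + 1)` of the derivative of `s / p ^ k`. -/
def derivDivPow {R : Type*} [CommRing R] (p : R[X]) (k : ℕ) (s : R[X]) : R[X] :=
  derivative s * p - k * s * derivative p

theorem hasDerivAt_eval_div_pow (p : ℝ[X]) (k : ℕ) (s : ℝ[X]) {z : ℝ} (hz : p.eval z ≠ 0) :
    HasDerivAt (fun y => s.eval y / p.eval y ^ k)
      ((derivDivPow p k s).eval z / p.eval z ^ (k + 1)) z := by
  refine ((s.hasDerivAt z).fun_div ((p.hasDerivAt z).fun_pow k) (pow_ne_zero k hz)).congr_deriv ?_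
  rcases k with _ | k
  · simp [derivDivPow, hz]
  · simp only [derivDivPow, eval_sub, eval_mul, eval_natCast, Nat.add_sub_cancel]
    field_simp
    ring

theorem SV_eval_div_iff {ν₁ ν₂ ν₃ : ℝ} {p s : ℝ[X]} {z : ℝ} (hz : p.eval z ≠ 0) :
    SV ν₁ ν₂ ν₃ (fun y => s.eval y / p.eval y) z ↔
      (sigmaFiveHom (C ν₁) (C ν₂) (C ν₃) X p s (derivDivPow p 1 s)
        (derivDivPow p 2 (derivDivPow p 1 s))).eval z = 0 := by
  have hderiv : ∀ y, p.eval y ≠ 0 → deriv (fun y => s.eval y / p.eval y) y =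
      (derivDivPow p 1 s).eval y / p.eval y ^ 2 := fun y hy => by
    simpa only [pow_one] using (hasDerivAt_eval_div_pow p 1 s hy).deriv
  have hderiv₂ : iteratedDeriv 2 (fun y => s.eval y / p.eval y) z =
      (derivDivPow p 2 (derivDivPow p 1 s)).eval z / p.eval z ^ 3 := by
    have heq := (p.continuous.continuousAt.eventually_ne hz).mono hderiv
    rw [iteratedDeriv_succ, iteratedDeriv_one, Filter.EventuallyEq.deriv_eq heq,
      (hasDerivAt_eval_div_pow p 2 _ hz).deriv]
  rw [SV_iff_sigmaFive_eq_zero, hderiv z hz, hderiv₂, sigmaFive_div_eq_zero_iff hz,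
    ← coe_evalRingHom, map_sigmaFiveHom]
  simp

theorem sigmaFive_map_div_iff {R S K : Type*} [CommRing R] [CommRing S] [Field K] [Algebra S K]
    {D : Derivation S K K} {φ : R[X] →+* K} (hφ : Function.Injective φ)
    (hD : ∀ q, D (φ q) = φ (derivative q)) {ν₁ ν₂ ν₃ p s : R[X]} (hp : p ≠ 0) {f : K}
    (hf : f = φ s / φ p) :
    sigmaFive (φ ν₁) (φ ν₂) (φ ν₃) (φ X) f (D f) (D (D f)) = 0 ↔
      sigmaFiveHom ν₁ ν₂ ν₃ X p s (derivDivPow p 1 s)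
        (derivDivPow p 2 (derivDivPow p 1 s)) = 0 := by
  have hφp : φ p ≠ 0 := (map_ne_zero_iff φ hφ).mpr hp
  have hDdiv : ∀ (k : ℕ) (q : R[X]),
      D (φ q / φ p ^ k) = φ (derivDivPow p k q) / φ p ^ (k + 1) := fun k q => by
    simp only [derivation_div_pow D _ hφp, hD, derivDivPow, map_sub, map_mul, map_natCast]
  have hDf : D f = φ (derivDivPow p 1 s) / φ p ^ 2 := by
    rw [hf, ← hDdiv, pow_one]
  rw [hDf, hDdiv, hf, sigmaFive_div_eq_zero_iff hφp, ← map_sigmaFiveHom, map_eq_zero_iff φ hφ]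

theorem sigmaFiveHom_derivativeHankel {R : Type*} [CommRing R] [IsDomain R] [CharZero R] {p : R[X]}
    {c ν : R} {n : ℕ} (hp : p ≠ 0) (hn : n ≤ p.natDegree)
    (hode : X * derivative (derivative p) + (C c - X) * derivative p + C ν * p = 0) {T s : R[X]}
    (hT : T = derivativeHankel p n) (hs : s = X * derivative T - C ((ν + 1 - n) * n) * T) :
    sigmaFiveHom (C (ν + 1 - n)) (C (-(n : R))) (C (ν + c - 1)) X T s (derivDivPow T 1 s)
      (derivDivPow T 2 (derivDivPow T 1 s)) = 0 := by
  let φ := algebraMap R[X] (FractionRing R[X])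
  have hφ : Function.Injective φ := FaithfulSMul.algebraMap_injective _ _
  have : Algebra.FormallyEtale R[X] (FractionRing R[X]) := .of_isLocalization (nonZeroDivisors R[X])
  obtain ⟨D, hD⟩ : ∃ D : Derivation R (FractionRing R[X]) (FractionRing R[X]),
      ∀ q, D (φ q) = φ (derivative q) := exists_derivation_extension derivative'
  let g : ℕ → FractionRing R[X] := fun k => φ (derivative^[k] p)
  have hτ : ∀ j, hankelDet g j = φ (derivativeHankel p j) := fun j => (map_hankelDet φ _ j).symm
  have hode' : φ X * g 2 + (φ (C c) - φ X) * g 1 + φ (C ν) * g 0 = 0 := by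
    simpa only [map_add, map_sub, map_mul, map_zero] using! congrArg φ hode
  have hτne : ∀ j ≤ n + 1, derivativeHankel p j ≠ 0 := fun j hj =>
    (derivativeHankel_ne_zero_and_natDegree hp (by lia)).1
  have hne : ∀ j ≤ n + 1, hankelDet g j ≠ 0 := fun j hj => by
    rw [hτ]
    exact (map_ne_zero_iff φ hφ).mpr (hτne j hj)
  have hT0 : T ≠ 0 := hT ▸ hτne n (by lia)
  have hφT : φ T ≠ 0 := (map_ne_zero_iff φ hφ).mpr hT0
  have hσ : φ s / φ T =
      φ X * (D (hankelDet g n) / hankelDet g n) - (φ (C ν) + 1 - n) * n := by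
    rw [hτ, hD, ← hT, hs]
    simp only [map_natCast, map_sub, map_add, map_mul, map_one]
    field_simp
  rw [← sigmaFive_map_div_iff hφ hD hT0 rfl]
  simpa only [map_natCast, map_neg, map_sub, map_add, map_one] using
    sigmaFive_hankelDet (by rw [hD, derivative_X, map_one]) (by rw [hD, derivative_C, map_zero])
      (by rw [hD, derivative_C, map_zero])
      (fun k => by rw [hD, ← Function.iterate_succ_apply' derivative]) hode' hne hσ

end RationalSolution

section GenLag

open Polynomial

theorem SV_genLag (m n : ℕ) (μ : ℝ) {z : ℝ} (hz : genLag m n μ z ≠ 0) :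
    SV (m + 1) (-n) (m + n + μ + 1)
      (fun y => y * deriv (genLag m n μ) y / genLag m n μ y - (m + 1) * n) z := by
  simp only [genLag_natCast, Polynomial.deriv] at hz ⊢
  set T := genLagPoly m n μ with hT
  have heq : (fun y => y * (derivative T).eval y / T.eval y - ((m : ℝ) + 1) * n) =ᶠ[nhds z]
      fun y => (X * derivative T - C (((m : ℝ) + 1) * n) * T).eval y / T.eval y := by
    filter_upwards [T.continuous.continuousAt.eventually_ne hz] with y hy
    simp only [eval_sub, eval_mul, eval_X, eval_C]
    field_simp
  have hν₁ : ((m + n : ℕ) : ℝ) + 1 - n = m + 1 := by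
    push_cast
    ring
  have hν₃ : ((m + n : ℕ) : ℝ) + (μ + 1 + 1) - 1 = m + n + μ + 1 := by
    push_cast
    ring
  rw [SV_congr heq, SV_eval_div_iff hz, ← hν₁, ← hν₃,
    sigmaFiveHom_derivativeHankel (laguerrePoly_ne_zero _ _)
      (by rw [natDegree_laguerrePoly]; lia) (laguerrePoly_ode _ _) hT rfl, eval_zero]

theorem eventually_differentiableAt_genLag_logDeriv (m n : ℕ) (μ : ℝ) {z : ℝ}
    (hz : genLag m n μ z ≠ 0) :
    ∀ᶠ x in nhds z, DifferentiableAt ℝ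
      (fun y => y * deriv (genLag m n μ) y / genLag m n μ y - (m + 1) * n) x := by
  simp only [genLag_natCast, Polynomial.deriv] at hz ⊢
  filter_upwards [(genLagPoly m n μ).continuous.continuousAt.eventually_ne hz] with x hx
  have hpoly (p : ℝ[X]) : DifferentiableAt ℝ (fun y => p.eval y) x := p.differentiableAt
  exact ((differentiableAt_fun_id.fun_mul (hpoly _)).fun_div (hpoly _) hx).sub_const _

end GenLag

theorem SV_reflect {ν₁ ν₂ ν₃ : ℝ} {σ : ℝ → ℝ} {z : ℝ}
    (hσ : ∀ᶠ y in nhds (-z), DifferentiableAt ℝ σ y) (h : SV ν₁ ν₂ ν₃ σ (-z)) :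
    SV ν₁ (ν₁ - ν₃) (ν₁ - ν₂) (fun y => σ (-y) - ν₁ * y + ν₁ * (ν₁ - ν₂ - ν₃)) z := by
  have hderiv : ∀ᶠ y in nhds z,
      deriv (fun y => σ (-y) - ν₁ * y + ν₁ * (ν₁ - ν₂ - ν₃)) y = -deriv σ (-y) - ν₁ := by
    filter_upwards [(continuous_neg.tendsto z).eventually hσ] with y hy
    have hneg : HasDerivAt (fun y => σ (-y)) (-deriv σ (-y)) y := by
      simpa using! hy.hasDerivAt.comp y (hasDerivAt_neg y)
    simpa only [mul_one] using
      ((hneg.fun_sub ((hasDerivAt_id' y).const_mul ν₁)).add_const (ν₁ * (ν₁ - ν₂ - ν₃))).deriv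
  have hderiv₂ : iteratedDeriv 2 (fun y => σ (-y) - ν₁ * y + ν₁ * (ν₁ - ν₂ - ν₃)) z =
      iteratedDeriv 2 σ (-z) := by
    rw [iteratedDeriv_succ, iteratedDeriv_one, Filter.EventuallyEq.deriv_eq hderiv,
      iteratedDeriv_succ, iteratedDeriv_one, deriv_sub_const, deriv.fun_neg, deriv_comp_neg,
      neg_neg]
  rw [SV, hderiv.self_of_nhds, hderiv₂]
  rw [SV] at h
  linear_combination h

/-- non-uniqueness of rational solutions of `S_V` for integer `μ = k ≥ 1-n`. -/
theorem sv_nonuniqueness (m n : ℕ) (hn : 1 ≤ n) (k : ℤ) (hk : 1 - (n : ℤ) ≤ k)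
    (σ σh : ℝ → ℝ)
    (hσ : σ = fun z =>
      z * deriv (genLag (m : ℤ) n (k : ℝ)) z / genLag (m : ℤ) n (k : ℝ) z
        - ((m : ℝ) + 1) * n)
    (hσh : σh = fun z =>
      z * deriv (fun t => genLag (m : ℤ) ((n : ℤ) + k).toNat (-(k : ℝ)) (-t)) z /
          genLag (m : ℤ) ((n : ℤ) + k).toNat (-(k : ℝ)) (-z)
        - ((m : ℝ) + 1) * z - ((m : ℝ) + 1) * n) :
    (∀ z : ℝ, z ≠ 0 → genLag (m : ℤ) n (k : ℝ) z ≠ 0 →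
        SV ((m : ℝ) + 1) (-(n : ℝ)) ((m : ℝ) + n + k + 1) σ z)
      ∧ ∀ z : ℝ, z ≠ 0 → genLag (m : ℤ) ((n : ℤ) + k).toNat (-(k : ℝ)) (-z) ≠ 0 →
        SV ((m : ℝ) + 1) (-(n : ℝ)) ((m : ℝ) + n + k + 1) σh z := by
  constructor
  · rintro z - hz
    rw [hσ]
    exact SV_genLag m n k hz
  · rintro z - hz
    set r := ((n : ℤ) + k).toNat
    have hr : (r : ℝ) = n + k := by
      exact_mod_cast Int.toNat_of_nonneg (show 0 ≤ (n : ℤ) + k by lia)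
    have hreflect := SV_reflect (eventually_differentiableAt_genLag_logDeriv m r (-k) hz)
      (SV_genLag m r (-k) hz)
    have hσh' : σh = fun y => -y * deriv (genLag m r (-k)) (-y) / genLag m r (-k) (-y) -
        (m + 1) * r - (m + 1) * y + (m + 1) * ((m + 1) - -r - (m + r + -k + 1)) := by
      rw [hσh]
      funext y
      rw [deriv_comp_neg, hr]
      ring
    rw [hσh']
    convert hreflect using 1 <;> rw [hr] <;> ring
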